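/- For every real α ≥ 0, the difference d_↑(α) = d_ICCI(α) − d_IC(α) between the per-user degrees of freedom with and without the common message equals: α/2 if 0 ≤ α < 1/2; (2 − 3α)/2 if 1/2 ≤ α < 2/3; 0 if 2/3 ≤ α < 2; and (α − 2)/2 if α ≥ 2. Here d_ICCI(α) = sup{ (d0 + 2·d1)/2 : (d0, d1) ∈ D_sym(α) } and d_IC(α) = sup{ d1 : (0, d1) ∈ D_sym(α) }. -/

import Mathlib

/-!
The bound on `d0 + 2 * d1` is attained at the corner `(α, max 0 (1 - α))` and thus determines
`dICCI`. With no common message this bound becomes `d1 ≤ dICCI α`, and the only other active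
constraint is the individual bound `d1 ≤ min 1 (max α (1 - α))`. So the gain is the amount, if
positive, by which `dICCI α` exceeds the individual bound.
-/

noncomputable section

/-- The region D_sym(α) for the symmetric Gaussian IC-CI, as a predicate on the
pair (d0, d1) (with d1 = d2). -/
def Dsym (α d0 d1 : ℝ) : Prop :=
  0 ≤ d0 ∧ 0 ≤ d1 ∧ d0 + d1 ≤ max 1 α ∧ d1 ≤ min 1 (max α (1 - α)) ∧
    d0 + 2 * d1 ≤ max 1 α + max 0 (1 - α)

/-- The per-user GDoF with the common message. -/
def dICCI (α : ℝ) : ℝ :=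
  sSup { x : ℝ | ∃ d0 d1 : ℝ, Dsym α d0 d1 ∧ x = (d0 + 2 * d1) / 2 }

/-- The per-user GDoF without the common message. -/
def dIC (α : ℝ) : ℝ := sSup { d1 : ℝ | Dsym α 0 d1 }

theorem add_max_zero_sub {G : Type*} [AddCommGroup G] [LinearOrder G] [IsOrderedAddMonoid G]
    (a b : G) : a + max 0 (b - a) = max b a := by
  rw [add_max, add_zero, add_sub_cancel, max_comm]

section Region

variable {α : ℝ}

theorem dsym_corner (hα : 0 ≤ α) : Dsym α α (max 0 (1 - α)) := by
  have total : α + max 0 (1 - α) = max 1 α := add_max_zero_sub α 1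
  refine ⟨hα, le_max_left _ _, total.le, ?_, by linarith⟩
  exact le_min (max_le zero_le_one (by linarith)) (max_le_max_right _ hα)

theorem ofPred_dsym_zero_left (α : ℝ) :
    {d1 : ℝ | Dsym α 0 d1} =
      Set.Icc 0 (min (min 1 (max α (1 - α))) ((max 1 α + max 0 (1 - α)) / 2)) := by
  ext d1
  rw [Set.mem_ofPred_eq, Set.mem_Icc, le_min_iff, le_div_iff₀' two_pos]
  constructor
  · rintro ⟨-, nonneg, -, individual, weighted⟩
    exact ⟨nonneg, individual, by rwa [zero_add] at weighted⟩
  · rintro ⟨nonneg, individual, weighted⟩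
    have total : d1 ≤ max 1 α := individual.trans ((min_le_left _ _).trans (le_max_left _ _))
    exact ⟨le_rfl, nonneg, by rwa [zero_add], individual, by rwa [zero_add]⟩

theorem dICCI_eq (hα : 0 ≤ α) : dICCI α = (max 1 α + max 0 (1 - α)) / 2 := by
  have corner_value : max 1 α + max 0 (1 - α) = α + 2 * max 0 (1 - α) := by
    rw [← add_max_zero_sub α 1, add_assoc, ← two_mul]
  refine IsGreatest.csSup_eq ⟨⟨α, max 0 (1 - α), dsym_corner hα, by rw [corner_value]⟩, ?_⟩
  rintro x ⟨d0, d1, ⟨-, -, -, -, weighted⟩, rfl⟩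
  exact div_le_div_of_nonneg_right weighted zero_le_two

theorem dICCI_of_le_one (hα : 0 ≤ α) (hα_one : α ≤ 1) : dICCI α = (2 - α) / 2 := by
  rw [dICCI_eq hα, max_eq_left hα_one, max_eq_right (sub_nonneg.2 hα_one)]
  ring

theorem dICCI_of_one_le (hα : 1 ≤ α) : dICCI α = α / 2 := by
  rw [dICCI_eq (zero_le_one.trans hα), max_eq_right hα, max_eq_left (sub_nonpos.2 hα), add_zero]

theorem dIC_eq (α : ℝ) :
    dIC α = min (min 1 (max α (1 - α))) ((max 1 α + max 0 (1 - α)) / 2) := by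
  rw [dIC, ofPred_dsym_zero_left]
  have individual_nonneg : 0 ≤ max α (1 - α) := by
    linarith [le_max_left α (1 - α), le_max_right α (1 - α)]
  exact csSup_Icc (le_min (le_min zero_le_one individual_nonneg) (by positivity))

theorem dICCI_sub_dIC_eq_max (hα : 0 ≤ α) :
    dICCI α - dIC α = max 0 (dICCI α - min 1 (max α (1 - α))) := by
  rw [dIC_eq, ← dICCI_eq hα, ← max_sub_sub_left, sub_self, max_comm]

theorem dICCI_sub_dIC_of_le_one (hα : 0 ≤ α) (hα_one : α ≤ 1) :
    dICCI α - dIC α = max 0 (min (α / 2) ((2 - 3 * α) / 2)) := by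
  have individual : min 1 (max α (1 - α)) = max (1 - α) α := by
    rw [max_comm, min_eq_right (max_le (sub_le_self 1 hα) hα_one)]
  rw [dICCI_sub_dIC_eq_max hα, individual, dICCI_of_le_one hα hα_one, ← min_sub_sub_left]
  congr 2 <;> ring

theorem dICCI_sub_dIC_of_one_le (hα : 1 ≤ α) :
    dICCI α - dIC α = max 0 ((α - 2) / 2) := by
  have individual : min 1 (max α (1 - α)) = 1 :=
    min_eq_left (hα.trans (le_max_left _ _))
  rw [dICCI_sub_dIC_eq_max (zero_le_one.trans hα), individual, dICCI_of_one_le hα]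
  congr 1
  ring

end Region

/-- The GDoF improvement per user due to the common message over the symmetric
Gaussian IC-CI. -/
theorem dUp_formula (α : ℝ) (hα : 0 ≤ α) :
    dICCI α - dIC α =
      if α < 1/2 then α/2
      else if α < 2/3 then (2 - 3*α)/2
      else if α < 2 then 0
      else (α - 2)/2 := by
  split_ifs with h_half h_two_thirds h_two
  · rw [dICCI_sub_dIC_of_le_one hα (by linarith), min_eq_left (by linarith),
      max_eq_right (by linarith)]
  · rw [dICCI_sub_dIC_of_le_one hα (by linarith), min_eq_right (by linarith),
      max_eq_right (by linarith)]
  · rcases le_total α 1 with hα_one | hα_one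
    · rw [dICCI_sub_dIC_of_le_one hα hα_one, max_eq_left (min_le_of_right_le (by linarith))]
    · rw [dICCI_sub_dIC_of_one_le hα_one, max_eq_left (by linarith)]
  · rw [dICCI_sub_dIC_of_one_le (by linarith), max_eq_right (by linarith)]

end
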